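/- Let A, B be canonically conjugate self-adjoint operators satisfying the Weyl relations, E the spectral measure of B, and ρ a state of B(H) that is dispersion-free on W*(A) and well-defined for A. Then ρ(E(C)) = 0 for every compact interval C ⊆ ℝ. Consequently there is no state for which A and B have joint beable status. -/

import Mathlib

open scoped ComplexOrder

/-- A function `f : ℝ → ℂ` is bounded and Borel measurable. -/
def BddMeas (f : ℝ → ℂ) : Prop :=
  Measurable f ∧ ∃ M : ℝ, ∀ x : ℝ, ‖f x‖ ≤ M

/-- `Φ` is a unital *-homomorphism from the bounded Borel functions on ℝ into B(H),
contractive with respect to the sup norm (the bounded Borel functional calculus of a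
self-adjoint operator). -/
structure IsBddBorelHom {H : Type*} [NormedAddCommGroup H] [InnerProductSpace ℂ H]
    [CompleteSpace H] (Φ : (ℝ → ℂ) → (H →L[ℂ] H)) : Prop where
  map_one : Φ (fun _ => 1) = 1
  map_add : ∀ f g, BddMeas f → BddMeas g → Φ (f + g) = Φ f + Φ g
  map_smul : ∀ (c : ℂ) f, BddMeas f → Φ (c • f) = c • Φ f
  map_mul : ∀ f g, BddMeas f → BddMeas g → Φ (f * g) = Φ f * Φ g
  map_star : ∀ f, BddMeas f → Φ (fun x => starRingEnd ℂ (f x)) = star (Φ f)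
  norm_le : ∀ f (M : ℝ), BddMeas f → (∀ x, ‖f x‖ ≤ M) → ‖Φ f‖ ≤ M

/-!
A state that is dispersion-free at a unitary `u` is multiplicative on products with `u`
(Cauchy–Schwarz), so it kills every `w` with `u * w = c • (w * u)`, `c ≠ 1`. By the Weyl relation
`ρ (e ^ (itB)) = 0` for `t ≠ 0`: seen through the functional calculus of `B`, the state vanishes on
all nontrivial characters of `ℝ`. For such a functional the characters `e ^ (iktx)`, `k < N`, are
pairwise orthogonal, so the square modulus of their sum has expectation `N`; yet for small `t` it
is at least `N ^ 2 / 4` on a given bounded set `C`. Chebyshev's inequality gives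
`N * ρ (E(C)) ≤ 4` for every `N`.
-/

open scoped ComplexConjugate

theorem card_mul_le_norm_sum {ι E : Type*} [SeminormedAddCommGroup E] [NormedSpace ℝ E]
    {s : Finset ι} {z : ι → E} {v : E} {δ : ℝ} (hz : ∀ i ∈ s, ‖z i - v‖ ≤ δ) :
    s.card * (‖v‖ - δ) ≤ ‖∑ i ∈ s, z i‖ := by
  have hsum : ‖∑ i ∈ s, (z i - v)‖ ≤ s.card * δ := by
    simpa using norm_sum_le_of_le s hz
  have hcard : ‖(s.card : ℝ) • v‖ = s.card * ‖v‖ := by simp [norm_smul]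
  have htriangle := norm_sub_norm_le ((s.card : ℝ) • v) (∑ i ∈ s, z i)
  rw [Finset.sum_sub_distrib, Finset.sum_const, norm_sub_rev, ← Nat.cast_smul_eq_nsmul ℝ] at hsum
  linarith

section Functional

variable {A : Type*} [Ring A] [StarRing A] [Algebra ℂ A] {ρ : A →ₗ[ℂ] ℂ}

/-- Positivity of a linear functional on a complex `*`-algebra, phrased through the elements
`star a * a` so that the algebra needs no order. -/
def IsPositiveFunctional (ρ : A →ₗ[ℂ] ℂ) : Prop :=
  ∀ a, 0 ≤ ρ (star a * a)

theorem map_star_sum_mul_sum_of_orthogonal {ι : Type*} (s : Finset ι) (e : ι → A)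
    (he : Pairwise fun i j => ρ (star (e i) * e j) = 0) :
    ρ (star (∑ i ∈ s, e i) * ∑ i ∈ s, e i) = ∑ i ∈ s, ρ (star (e i) * e i) := by
  rw [star_sum, Finset.sum_mul_sum, map_sum]
  refine Finset.sum_congr rfl fun i hi => ?_
  rw [map_sum]
  exact Finset.sum_eq_single_of_mem i hi fun j _ hji => he hji.symm

namespace IsPositiveFunctional

theorem comp_starAlgHom {B : Type*} [Ring B] [StarRing B] [Algebra ℂ B]
    (hρ : IsPositiveFunctional ρ) (φ : B →⋆ₐ[ℂ] A) :
    IsPositiveFunctional (ρ ∘ₗ φ.toAlgHom.toLinearMap) := fun b => by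
  simpa [← StarHomClass.map_star] using hρ (φ b)

variable [StarModule ℂ A]

theorem conj_map_star_mul (hρ : IsPositiveFunctional ρ) (a b : A) :
    conj (ρ (star b * a)) = ρ (star a * b) := by
  -- Polarization: expand `0 ≤ ρ (star (a + c • b) * (a + c • b))` for `c = 1` and `c = I`.
  have im_cross_eq_zero (c : ℂ) : (c * ρ (star a * b) + conj c * ρ (star b * a)).im = 0 := by
    have hab := (Complex.nonneg_iff.1 (hρ (a + c • b))).2
    have ha := (Complex.nonneg_iff.1 (hρ a)).2
    have hb := (Complex.nonneg_iff.1 (hρ (c • b))).2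
    simp only [star_add, add_mul, mul_add, map_add, star_smul, smul_mul_assoc, mul_smul_comm,
      map_smul, smul_eq_mul, Complex.add_im, Complex.star_def] at hab hb ⊢
    linarith
  have him := im_cross_eq_zero 1
  have hre := im_cross_eq_zero Complex.I
  simp only [one_mul, map_one, Complex.add_im, Complex.I_mul_im, Complex.conj_I, neg_mul,
    Complex.neg_im] at him hre
  apply Complex.ext
  · rw [Complex.conj_re]; linarith
  · rw [Complex.conj_im]; linarith

theorem map_star (hρ : IsPositiveFunctional ρ) (a : A) : ρ (star a) = conj (ρ a) := by
  simpa using (hρ.conj_map_star_mul a 1).symm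

/-- The semi-inner product `⟪a, b⟫ = ρ (star a * b)` of the GNS construction, which makes the
Cauchy–Schwarz inequality available for `ρ`. -/
abbrev preInnerProductSpaceCore (hρ : IsPositiveFunctional ρ) : PreInnerProductSpace.Core ℂ A where
  inner a b := ρ (star a * b)
  conj_inner_symm := hρ.conj_map_star_mul
  re_inner_nonneg a := (Complex.nonneg_iff.1 (hρ a)).1
  add_left a b c := by rw [star_add, add_mul, map_add]
  smul_left a b c := by simp

theorem map_mul_eq_zero_of_map_star_mul_self_eq_zero (hρ : IsPositiveFunctional ρ) {a : A}
    (ha : ρ (star a * a) = 0) (b : A) : ρ (b * a) = 0 := by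
  have hcs : ‖ρ (star (star b) * a)‖ * ‖ρ (star a * star b)‖ ≤
      (ρ (star (star b) * star b)).re * (ρ (star a * a)).re :=
    InnerProductSpace.Core.inner_mul_inner_self_le (c := hρ.preInnerProductSpaceCore) (star b) a
  have hsymm : ‖ρ (star a * star b)‖ = ‖ρ (star (star b) * a)‖ := by
    rw [← hρ.conj_map_star_mul, RCLike.norm_conj]
  rw [hsymm, star_star, ha, Complex.zero_re, mul_zero] at hcs
  exact norm_eq_zero.1 (mul_self_eq_zero.1 (hcs.antisymm (mul_self_nonneg _)))

theorem map_mul_of_map_star_mul_self (hρ : IsPositiveFunctional ρ) (hone : ρ 1 = 1) {a : A}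
    (ha : ρ (star a * a) = ρ (star a) * ρ a) (b : A) : ρ (b * a) = ρ b * ρ a := by
  have hvar : ρ (star (a - ρ a • 1) * (a - ρ a • 1)) = 0 := by
    simp only [star_sub, star_smul, star_one, sub_mul, mul_sub, smul_mul_assoc, mul_smul_comm,
      one_mul, mul_one, map_sub, map_smul, smul_eq_mul, hone, ha, hρ.map_star, Complex.star_def]
    ring
  have hmul := hρ.map_mul_eq_zero_of_map_star_mul_self_eq_zero hvar b
  rwa [mul_sub, mul_smul_comm, mul_one, map_sub, map_smul, smul_eq_mul, sub_eq_zero,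
    mul_comm] at hmul

theorem map_mul_of_map_mul_star_self (hρ : IsPositiveFunctional ρ) (hone : ρ 1 = 1) {a : A}
    (ha : ρ (a * star a) = ρ a * ρ (star a)) (b : A) : ρ (a * b) = ρ a * ρ b := by
  have hstar := hρ.map_mul_of_map_star_mul_self hone (a := star a) (by rwa [star_star]) (star b)
  rw [← star_mul, hρ.map_star, hρ.map_star, hρ.map_star, ← map_mul] at hstar
  rw [(starRingEnd ℂ).injective hstar, mul_comm]

theorem map_eq_zero_of_mul_eq_smul_mul (hρ : IsPositiveFunctional ρ) (hone : ρ 1 = 1)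
    {u w : A} {c : ℂ} (hu : u ∈ unitary A) (hdisp : ρ (u * star u) = ρ u * ρ (star u))
    (hc : c ≠ 1) (huw : u * w = c • (w * u)) : ρ w = 0 := by
  have hdisp' : ρ (star u * u) = ρ (star u) * ρ u := by
    rw [Unitary.star_mul_self_of_mem hu, ← Unitary.mul_star_self_of_mem hu, hdisp, mul_comm]
  have hu0 : ρ u ≠ 0 := left_ne_zero_of_mul_eq_one (b := ρ (star u)) <| by
    rw [← hdisp, Unitary.mul_star_self_of_mem hu, hone]
  have hρuw := congrArg ρ huw
  rw [map_smul, hρ.map_mul_of_map_mul_star_self hone hdisp,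
    hρ.map_mul_of_map_star_mul_self hone hdisp', smul_eq_mul] at hρuw
  have hprod : (1 - c) * (ρ u * ρ w) = 0 := by linear_combination hρuw
  simpa [sub_ne_zero.2 hc.symm, hu0] using hprod

end IsPositiveFunctional

end Functional

section BoundedMeasurable

variable {X : Type*} [MeasurableSpace X]

/-- The `*`-algebra of bounded measurable complex functions on `X`, the domain of a bounded Borel
functional calculus. -/
def boundedMeasurable (X : Type*) [MeasurableSpace X] : StarSubalgebra ℂ (X → ℂ) where
  carrier := {f | Measurable f ∧ ∃ M : ℝ, ∀ x, ‖f x‖ ≤ M}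
  mul_mem' := by
    rintro f g ⟨hf, M, hM⟩ ⟨hg, K, hK⟩
    exact ⟨hf.mul hg, M * K, fun x => norm_mul_le_of_le (hM x) (hK x)⟩
  add_mem' := by
    rintro f g ⟨hf, M, hM⟩ ⟨hg, K, hK⟩
    exact ⟨hf.add hg, M + K, fun x => norm_add_le_of_le (hM x) (hK x)⟩
  algebraMap_mem' c := ⟨measurable_const, ‖c‖, fun _ => le_rfl⟩
  star_mem' := by
    rintro f ⟨hf, M, hM⟩
    exact ⟨continuous_star.measurable.comp hf, M, fun x => (norm_star (f x)).trans_le (hM x)⟩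

namespace boundedMeasurable

/-- The indicator function `1_C` of a measurable set, as a bounded measurable function. -/
noncomputable def indicatorOne {C : Set X} (hC : MeasurableSet C) : boundedMeasurable X :=
  ⟨C.indicator fun _ => 1, measurable_const.indicator hC, 1, fun x => by
    simpa using norm_indicator_le_norm_self (s := C) (fun _ => (1 : ℂ)) x⟩

/-- The character `x ↦ e ^ (itx)` of `ℝ`, as a bounded measurable function. -/
noncomputable def character (t : ℝ) : boundedMeasurable ℝ :=
  ⟨fun x => Complex.exp (t * x * Complex.I), by fun_prop, 1, fun x => by
    exact_mod_cast (Complex.norm_exp_ofReal_mul_I (t * x)).le⟩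

theorem character_apply (t x : ℝ) : (character t).1 x = Complex.exp (t * x * Complex.I) :=
  rfl

theorem character_zero : character 0 = 1 := by
  ext x
  change (character 0).1 x = 1
  simp [character_apply]

theorem star_character_mul (s t : ℝ) : star (character s) * character t = character (t - s) := by
  ext x
  change conj ((character s).1 x) * (character t).1 x = (character (t - s)).1 x
  rw [character_apply, character_apply, character_apply, ← Complex.exp_conj, ← Complex.exp_add]
  congr 1
  simp only [map_mul, Complex.conj_ofReal, Complex.conj_I, Complex.ofReal_sub]
  ring

theorem norm_character_sub_one_le (t x : ℝ) : ‖(character t).1 x - 1‖ ≤ |t * x| := by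
  simpa [character_apply, mul_comm] using Real.norm_exp_I_mul_ofReal_sub_one_le (x := t * x)

end boundedMeasurable

open boundedMeasurable

namespace IsPositiveFunctional

variable {ω : boundedMeasurable X →ₗ[ℂ] ℂ}

theorem map_nonneg (hω : IsPositiveFunctional ω) {f : boundedMeasurable X} (hf : 0 ≤ f) :
    0 ≤ ω f := by
  obtain ⟨f, hmeas, M, hM⟩ := f
  let g : boundedMeasurable X := ⟨fun x => (√(f x).re : ℝ), by fun_prop, √M, fun x => by
    rw [Complex.norm_of_nonneg (Real.sqrt_nonneg _)]
    exact Real.sqrt_le_sqrt ((Complex.re_le_norm _).trans (hM x))⟩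
  convert hω g using 2
  ext x
  obtain ⟨hre, him⟩ := Complex.nonneg_iff.1 (hf x)
  change f x = conj ((√(f x).re : ℝ) : ℂ) * (√(f x).re : ℝ)
  rw [Complex.conj_ofReal, ← Complex.ofReal_mul, Real.mul_self_sqrt hre]
  exact Complex.ext rfl him.symm

theorem sq_mul_map_indicatorOne_le (hω : IsPositiveFunctional ω) {C : Set X} (hC : MeasurableSet C)
    {f : boundedMeasurable X} {r : ℝ} (hr : 0 ≤ r) (hf : ∀ x ∈ C, r ≤ ‖f.1 x‖) :
    (r : ℂ) ^ 2 * ω (indicatorOne hC) ≤ ω (star f * f) := by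
  have hpointwise : 0 ≤ star f * f - (r : ℂ) ^ 2 • indicatorOne hC := fun x => by
    change 0 ≤ conj (f.1 x) * f.1 x - (r : ℂ) ^ 2 * C.indicator (fun _ => 1) x
    rw [Complex.conj_mul', sub_nonneg]
    by_cases hx : x ∈ C
    · rw [Set.indicator_of_mem hx, mul_one]
      exact_mod_cast pow_le_pow_left₀ hr (hf x hx) 2
    · rw [Set.indicator_of_notMem hx, mul_zero]
      exact_mod_cast sq_nonneg ‖f.1 x‖
  simpa only [map_sub, map_smul, smul_eq_mul, sub_nonneg] using hω.map_nonneg hpointwise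

end IsPositiveFunctional

theorem exists_forall_half_le_norm_sum_character {C : Set ℝ} (hC : Bornology.IsBounded C)
    (N : ℕ) :
    ∃ t : ℝ, t ≠ 0 ∧ ∀ x ∈ C, (N / 2 : ℝ) ≤ ‖(∑ k ∈ Finset.range N, character (k * t)).1 x‖ := by
  obtain ⟨R, hR, hCR⟩ := hC.exists_pos_norm_le
  refine ⟨1 / (2 * (N + 1) * R), by positivity, fun x hx => ?_⟩
  set t : ℝ := 1 / (2 * (N + 1) * R) with ht
  have hclose : ∀ k ∈ Finset.range N, ‖(character (k * t)).1 x - 1‖ ≤ 1 / 2 := by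
    intro k hk
    have hkN : (k : ℝ) ≤ N + 1 := by exact_mod_cast (Finset.mem_range.1 hk).le.trans N.le_succ
    calc ‖(character (k * t)).1 x - 1‖ ≤ |k * t * x| := norm_character_sub_one_le _ _
      _ = k * t * ‖x‖ := by rw [abs_mul, abs_of_nonneg (by positivity), Real.norm_eq_abs]
      _ ≤ (N + 1) * t * R := by gcongr; exact hCR x hx
      _ = 1 / 2 := by rw [ht]; field_simp
  have hsum := card_mul_le_norm_sum hclose
  rw [Finset.card_range, norm_one] at hsum
  rw [AddSubmonoidClass.coe_finsetSum, Finset.sum_apply]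
  linarith

namespace IsPositiveFunctional

variable {ω : boundedMeasurable ℝ →ₗ[ℂ] ℂ}

theorem map_indicatorOne_le_div (hω : IsPositiveFunctional ω)
    (hchar : ∀ t ≠ 0, ω (character t) = 0) {C : Set ℝ} (hC : MeasurableSet C)
    (hCb : Bornology.IsBounded C) {N : ℕ} (hN : 0 < N) :
    ω (indicatorOne hC) ≤ 4 * ω 1 / N := by
  obtain ⟨t, ht, hlarge⟩ := exists_forall_half_le_norm_sum_character hCb N
  let e : ℕ → boundedMeasurable ℝ := fun k => character (k * t)
  have hinner (j k : ℕ) : ω (star (e j) * e k) = ω (character ((k - j) * t)) := by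
    rw [star_character_mul, sub_mul]
  have horth : Pairwise fun j k => ω (star (e j) * e k) = 0 := fun j k hjk => by
    have hkj : (k - j : ℝ) ≠ 0 := sub_ne_zero.2 (Nat.cast_injective.ne hjk.symm)
    exact (hinner j k).trans (hchar _ (mul_ne_zero hkj ht))
  have hnormSq : ω (star (∑ k ∈ Finset.range N, e k) * ∑ k ∈ Finset.range N, e k) =
      N * ω 1 := by
    simp only [map_star_sum_mul_sum_of_orthogonal _ _ horth, hinner, sub_self, zero_mul,
      character_zero, Finset.sum_const, Finset.card_range, nsmul_eq_mul]
  have hchebyshev := hω.sq_mul_map_indicatorOne_le hC (by positivity) hlarge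
  rw [hnormSq] at hchebyshev
  have hN' : (0 : ℂ) < N := by exact_mod_cast hN
  rw [le_div_iff₀ hN']
  refine le_of_mul_le_mul_left ?_ hN'
  calc N * (ω (indicatorOne hC) * N)
      = 4 * (((N / 2 : ℝ) : ℂ) ^ 2 * ω (indicatorOne hC)) := by push_cast; ring
    _ ≤ 4 * (N * ω 1) := mul_le_mul_of_nonneg_left hchebyshev zero_le_four
    _ = N * (4 * ω 1) := by ring

theorem map_indicatorOne_eq_zero (hω : IsPositiveFunctional ω)
    (hchar : ∀ t ≠ 0, ω (character t) = 0) {C : Set ℝ} (hC : MeasurableSet C)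
    (hCb : Bornology.IsBounded C) : ω (indicatorOne hC) = 0 := by
  have hnonneg : 0 ≤ indicatorOne hC := Set.indicator_nonneg fun _ _ => zero_le_one
  refine le_antisymm ?_ (hω.map_nonneg hnonneg)
  refine ge_of_tendsto (tendsto_const_div_atTop_nhds_zero_nat (𝕜 := ℂ) (4 * ω 1)) ?_
  filter_upwards [Filter.eventually_gt_atTop 0] with N hN
  exact hω.map_indicatorOne_le_div hchar hC hCb hN

end IsPositiveFunctional

namespace IsBddBorelHom

variable {H : Type*} [NormedAddCommGroup H] [InnerProductSpace ℂ H] [CompleteSpace H]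
  {Φ : (ℝ → ℂ) → (H →L[ℂ] H)}

/-- A bounded Borel functional calculus as a `*`-homomorphism on the algebra of bounded measurable
functions, forgetting its values on all other functions. -/
noncomputable def toStarAlgHom (hΦ : IsBddBorelHom Φ) :
    boundedMeasurable ℝ →⋆ₐ[ℂ] (H →L[ℂ] H) where
  toAlgHom := AlgHom.ofLinearMap
    { toFun := fun f => Φ f
      map_add' := fun f g => hΦ.map_add f g f.2 g.2
      map_smul' := fun c f => hΦ.map_smul c f f.2 }
    hΦ.map_one fun f g => hΦ.map_mul f g f.2 g.2
  map_star' f := hΦ.map_star f f.2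

theorem toStarAlgHom_character (hΦ : IsBddBorelHom Φ) (t : ℝ) :
    hΦ.toStarAlgHom (character t) =
      Φ fun x => Complex.exp (t * x * Complex.I) :=
  rfl

end IsBddBorelHom

theorem stmt_17_general {A : Type*} [Ring A] [StarRing A] [Algebra ℂ A] [StarModule ℂ A]
    (U : ℝ → A) (hU : ∀ s, U s ∈ unitary A) (ε : ℝ) (hε : ε ≠ 0)
    (Φ : boundedMeasurable ℝ →⋆ₐ[ℂ] A)
    (hWeyl : ∀ s t, U s * Φ (character t) =
      Complex.exp (ε * s * t * Complex.I) • (Φ (character t) * U s))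
    (ρ : A →ₗ[ℂ] ℂ) (hρ : IsPositiveFunctional ρ) (hone : ρ 1 = 1)
    (hdisp : ∀ s, ρ (U s * star (U s)) = ρ (U s) * ρ (star (U s)))
    {C : Set ℝ} (hC : MeasurableSet C) (hCb : Bornology.IsBounded C) :
    ρ (Φ (indicatorOne hC)) = 0 := by
  refine (hρ.comp_starAlgHom Φ).map_indicatorOne_eq_zero (fun t ht => ?_) hC hCb
  let s : ℝ := Real.pi / (ε * t)
  have hangle : ε * s * t = Real.pi := by simp only [s]; field_simp
  have hphase : Complex.exp (ε * s * t * Complex.I) ≠ 1 := by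
    rw [← Complex.ofReal_mul, ← Complex.ofReal_mul, hangle, Complex.exp_pi_mul_I]
    norm_num
  exact hρ.map_eq_zero_of_mul_eq_smul_mul hone (hU s) (hdisp s) hphase (hWeyl s t)

end BoundedMeasurable

/-- Let A, B be canonically conjugate self-adjoint operators (Weyl relation
e^{isA}e^{itB} = e^{±ist}e^{itB}e^{isA}), with E the spectral measure of B
(realized via the bounded Borel functional calculus Φ of B, so that
E(C) = Φ(χ_C) and Φ(e^{itx}) = e^{itB}).  If ρ is a state of B(H) that is
dispersion-free on W*(A), then ρ(E(C)) = 0 for every compact interval C ⊆ ℝ. -/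
theorem stmt_17 {H : Type*} [NormedAddCommGroup H] [InnerProductSpace ℂ H] [CompleteSpace H]
    (U W : ℝ → (H →L[ℂ] H))
    (hUu : ∀ s, U s ∈ unitary (H →L[ℂ] H)) (hWu : ∀ t, W t ∈ unitary (H →L[ℂ] H))
    (hU0 : U 0 = 1) (hUadd : ∀ s t, U (s + t) = U s * U t)
    (hUstar : ∀ s, star (U s) = U (-s))
    (ε : ℝ) (hε : ε = 1 ∨ ε = -1)
    (hWeyl : ∀ s t, U s * W t = Complex.exp (ε * s * t * Complex.I) • (W t * U s))
    (Φ : (ℝ → ℂ) → (H →L[ℂ] H)) (hΦ : IsBddBorelHom Φ)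
    (hΦW : ∀ t : ℝ, Φ (fun x => Complex.exp (t * x * Complex.I)) = W t)
    (ρ : (H →L[ℂ] H) →ₗ[ℂ] ℂ)
    (hpos : ∀ T : H →L[ℂ] H, 0 ≤ ρ (star T * T)) (hone : ρ 1 = 1)
    (hmult : ∀ s t, ρ (U s * U t) = ρ (U s) * ρ (U t)) :
    ∀ a b : ℝ, ρ (Φ (Set.indicator (Set.Icc a b) (fun _ => (1 : ℂ)))) = 0 :=
  fun a b => stmt_17_general U hUu ε (by rcases hε with rfl | rfl <;> norm_num) hΦ.toStarAlgHom
    (fun s t => by rw [hΦ.toStarAlgHom_character, hΦW, hWeyl]) ρ hpos hone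
    (fun s => by rw [hUstar, hmult]) measurableSet_Icc (Metric.isBounded_Icc a b)
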